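/- Every member X of the term algebra of Z splits only finitely many pairs (x,y) of distinct elements of I. -/

import Mathlib

open FirstOrder FirstOrder.Language

/-- Relation symbols of the language of atom structures: a unary `I`,
a binary `C` and a ternary `P`. -/
inductive AtomRel : ℕ → Type
  | I : AtomRel 1
  | C : AtomRel 2
  | P : AtomRel 3

/-- The first-order language with one ternary relation symbol `P`, one binary
relation symbol `C` and one unary relation symbol `I`. -/
def atomLang : FirstOrder.Language :=
  ⟨fun _ => Empty, AtomRel⟩

/-- Function symbols of the language of the term algebras: a constant `1'`,
unary symbols `−` (complement) and `⁻` (converse), binary symbols `+` and `;`. -/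
inductive AlgFun : ℕ → Type
  | one : AlgFun 0
  | compl : AlgFun 1
  | conv : AlgFun 1
  | add : AlgFun 2
  | comp : AlgFun 2

/-- The first-order language with binary operations `+` and `;`, unary
operations `−` and `⁻`, and a constant `1'`. -/
def algLang : FirstOrder.Language :=
  ⟨AlgFun, fun _ => Empty⟩

section Generic

variable {M : Type} [atomLang.Structure M]

/-- The interpretation of the unary relation symbol `I`. -/
def mI (a : M) : Prop := Structure.RelMap (L := atomLang) (AtomRel.I : atomLang.Relations 1) ![a]

/-- The interpretation of the binary relation symbol `C`. -/
def mC (a b : M) : Prop := Structure.RelMap (L := atomLang) (AtomRel.C : atomLang.Relations 2) ![a, b]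

/-- The interpretation of the ternary relation symbol `P`. -/
def mP (a b c : M) : Prop := Structure.RelMap (L := atomLang) (AtomRel.P : atomLang.Relations 3) ![a, b, c]

/-- `X ; Y = {u : ∃ x ∈ X, y ∈ Y, P(x,y,u)}`. -/
def sComp (X Y : Set M) : Set M := {u | ∃ x ∈ X, ∃ y ∈ Y, mP x y u}

/-- `X⁻ = {u : ∃ x ∈ X, C(x,u)}`. -/
def sConv (X : Set M) : Set M := {u | ∃ x ∈ X, mC x u}

/-- The set of elements satisfying `I`. -/
def idSet (M : Type) [atomLang.Structure M] : Set M := {a | mI a}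

end Generic

/-- Membership in the term algebra: the smallest collection of subsets of `M`
containing all singletons and the set `I`, closed under binary union,
complementation, `;` and `⁻`. -/
inductive InTA (M : Type) [atomLang.Structure M] : Set M → Prop
  | sing (a : M) : InTA M {a}
  | idset : InTA M (idSet M)
  | union {X Y : Set M} : InTA M X → InTA M Y → InTA M (X ∪ Y)
  | compl {X : Set M} : InTA M X → InTA M Xᶜ
  | comp {X Y : Set M} : InTA M X → InTA M Y → InTA M (sComp X Y)
  | conv {X : Set M} : InTA M X → InTA M (sConv X)

/-- The term algebra of an atom structure, as a type. -/
def TermAlg (M : Type) [atomLang.Structure M] : Type := {X : Set M // InTA M X}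

/-- The term algebra as a structure in the language `algLang`:
`+` is union, `−` is complement, `;` and `⁻` are the operations defined from
`P` and `C`, and `1'` is the set `I`. -/
instance termAlgStructure (M : Type) [atomLang.Structure M] :
    algLang.Structure (TermAlg M) where
  funMap := fun {_} f v =>
    match f with
    | .one => ⟨idSet M, InTA.idset⟩
    | .compl => ⟨(v 0).1ᶜ, InTA.compl (v 0).2⟩
    | .conv => ⟨sConv (v 0).1, InTA.conv (v 0).2⟩
    | .add => ⟨(v 0).1 ∪ (v 1).1, InTA.union (v 0).2 (v 1).2⟩
    | .comp => ⟨sComp (v 0).1 (v 1).1, InTA.comp (v 0).2 (v 1).2⟩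
  RelMap := fun {_} r _ => r.elim

/-- `a` goes from `x` to `y` when `P(x,a,a)` and `P(a,y,a)`. -/
def goes {M : Type} [atomLang.Structure M] (a x y : M) : Prop := mP x a a ∧ mP a y a

/-- `X` splits the pair `(x,y)` when some `a ∈ X` and some `b ∉ X` both go
from `x` to `y`. -/
def SplitsG {M : Type} [atomLang.Structure M] (X : Set M) (x y : M) : Prop :=
  ∃ a ∈ X, ∃ b ∉ X, goes a x y ∧ goes b x y

/-- The pair `(x,y)` is splitable when `x ≠ y` and at least two distinct
elements go from `x` to `y`. -/
def SplitableG {M : Type} [atomLang.Structure M] (x y : M) : Prop :=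
  x ≠ y ∧ ∃ a b : M, a ≠ b ∧ goes a x y ∧ goes b x y

/-- Converse of a binary relation, as a set of pairs. -/
def relConv {U : Type} (R : Set (U × U)) : Set (U × U) := {p | (p.2, p.1) ∈ R}

/-- Composition of binary relations, as sets of pairs. -/
def relComp {U : Type} (R T : Set (U × U)) : Set (U × U) :=
  {p | ∃ w, (p.1, w) ∈ R ∧ (w, p.2) ∈ T}

/-- An atom structure is completely representable. -/
def CompRep (M : Type) [atomLang.Structure M] : Prop :=
  ∃ (U : Type) (rep : M → Set (U × U)),
    (∀ a : M, (rep a).Nonempty) ∧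
    (∀ a b : M, a ≠ b → Disjoint (rep a) (rep b)) ∧
    (⋃ a : M, rep a) = Set.univ ∧
    (∀ a : M, (mI a ↔ rep a ⊆ Set.diagonal U) ∧
      ((rep a ⊆ Set.diagonal U) ↔ (rep a ∩ Set.diagonal U).Nonempty)) ∧
    (∀ a b : M, (mC a b ↔ rep b = relConv (rep a)) ∧
      ((rep b = relConv (rep a)) ↔ (rep b ∩ relConv (rep a)).Nonempty)) ∧
    (∀ a b c : M, (mP a b c ↔ rep c ⊆ relComp (rep a) (rep b)) ∧
      ((rep c ⊆ relComp (rep a) (rep b)) ↔ (rep c ∩ relComp (rep a) (rep b)).Nonempty))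
/-- The atoms of the atom structure `Z`: identity atoms `id n i` (`i ≤ n`),
split atoms `r n k` and their converses `rc n k` (`1 ≤ k ≤ n`), and
atoms `w n i m j` (`i ≤ n`, `j ≤ m`).  Distinct constructor applications give
pairwise distinct elements. -/
inductive Atom : Type
  | id : (n i : ℕ) → i ≤ n → Atom
  | r : (n k : ℕ) → 1 ≤ k → k ≤ n → Atom
  | rc : (n k : ℕ) → 1 ≤ k → k ≤ n → Atom
  | w : (n i m j : ℕ) → i ≤ n → j ≤ m → Atom

/-- The domain function of `Z`. -/
def Atom.dom : Atom → Atom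
  | .id n i h => .id n i h
  | .r n _ _ _ => .id n 0 (Nat.zero_le n)
  | .rc n k _ h2 => .id n k h2
  | .w n i _ _ hi _ => .id n i hi

/-- The range function of `Z`. -/
def Atom.rg : Atom → Atom
  | .id n i h => .id n i h
  | .r n k _ h2 => .id n k h2
  | .rc n _ _ _ => .id n 0 (Nat.zero_le n)
  | .w _ _ m j _ hj => .id m j hj

/-- Membership in the set `I` of identity atoms of `Z`. -/
def Atom.isId : Atom → Prop
  | .id _ _ _ => True
  | _ => False

/-- The converse function on atoms of `Z`. -/
def Atom.cnv : Atom → Atom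
  | .id n i h => .id n i h
  | .r n k h1 h2 => .rc n k h1 h2
  | .rc n k h1 h2 => .r n k h1 h2
  | .w n i m j hi hj => .w m j n i hj hi

/-- The binary relation `C` of `Z`: it consists of the pairs `(x,x)` for
`x ∈ I`, `(r n k, rc n k)`, `(rc n k, r n k)` and `(w n i m j, w m j n i)`,
i.e. exactly the pairs `(a, cnv a)`. -/
def Crel (a b : Atom) : Prop := b = Atom.cnv a

/-- The ternary relation `P` of `Z`: the triples `(dom a, a, a)` and
`(a, rg a, a)` for `a ∈ S`, the triples `(a, b, dom a)` for `(a,b) ∈ C`, and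
the triples `(a,b,c)` of non-identity atoms with `dom a = dom c`,
`rg a = dom b`, `rg b = rg c`. -/
def Prel (a b c : Atom) : Prop :=
  (a = b.dom ∧ c = b) ∨
  (b = a.rg ∧ c = a) ∨
  (Crel a b ∧ c = a.dom) ∨
  (¬ a.isId ∧ ¬ b.isId ∧ ¬ c.isId ∧ a.dom = c.dom ∧ a.rg = b.dom ∧ b.rg = c.rg)

/-- `Z` as a structure for the language `atomLang`. -/
instance atomStructureZ : atomLang.Structure Atom where
  funMap := fun {_} f _ => f.elim
  RelMap := fun {_} r v =>
    match r with
    | AtomRel.I => (v 0).isId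
    | AtomRel.C => Crel (v 0) (v 1)
    | AtomRel.P => Prel (v 0) (v 1) (v 2)

/-- `X ⊆ S` splits the pair `(x,y)` if there are `a ∈ X` and `b ∉ X` with
`dom a = dom b = x` and `rg a = rg b = y`. -/
def Splits (X : Set Atom) (x y : Atom) : Prop :=
  ∃ a ∈ X, ∃ b ∉ X, a.dom = x ∧ a.rg = y ∧ b.dom = x ∧ b.rg = y

/-- The pair `(x,y)` is splitable if `x ≠ y` and there are two distinct
elements `a ≠ b` of `S` with `dom a = dom b = x` and `rg a = rg b = y`. -/
def Splitable (x y : Atom) : Prop :=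
  x ≠ y ∧ ∃ a b : Atom, a ≠ b ∧ a.dom = x ∧ a.rg = y ∧ b.dom = x ∧ b.rg = y

theorem aux_dom_cnv (a : Atom) : a.cnv.dom = a.rg := by cases a <;> rfl

theorem aux_rg_cnv (a : Atom) : a.cnv.rg = a.dom := by cases a <;> rfl

theorem aux_cnv_cnv (a : Atom) : a.cnv.cnv = a := by cases a <;> rfl

theorem aux_id (a : Atom) (h : a.isId) : a.dom = a.rg := by
  cases a <;> first | rfl | exact h.elim

theorem aux_dom_isId (a : Atom) : a.dom.isId := by cases a <;> trivial

theorem aux_conv (X : Set Atom) (u : Atom) : u ∈ sConv X ↔ u.cnv ∈ X := by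
  constructor
  · rintro ⟨x, hx, h⟩
    have h' : u = x.cnv := h
    rw [h', aux_cnv_cnv]; exact hx
  · intro h
    exact ⟨_, h, (aux_cnv_cnv u).symm⟩

theorem aux_comp (X Y : Set Atom) (u : Atom) :
    u ∈ sComp X Y ↔ ∃ x ∈ X, ∃ y ∈ Y, Prel x y u := Iff.rfl

theorem aux_splits_comp (X Y : Set Atom) (x y : Atom) (hne : x ≠ y)
    (h : Splits (sComp X Y) x y) : Splits X x y ∨ Splits Y x y := by
  obtain ⟨a, ha, b, hb, had, har, hbd, hbr⟩ := h
  rw [aux_comp] at ha hb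
  have hnb : ¬ b.isId := fun h => hne (by rw [← hbd, ← hbr, aux_id b h])
  have hna : ¬ a.isId := fun h => hne (by rw [← had, ← har, aux_id a h])
  obtain ⟨p, hp, q, hq, h | h | h | h⟩ := ha
  · obtain ⟨h1, rfl⟩ := h
    refine Or.inr ⟨a, hq, b, fun hbY => hb ⟨p, hp, b, hbY, Or.inl ⟨?_, rfl⟩⟩, had, har, hbd, hbr⟩
    rw [h1, had, hbd]
  · obtain ⟨h1, rfl⟩ := h
    refine Or.inl ⟨a, hp, b, fun hbX => hb ⟨b, hbX, q, hq, Or.inr (Or.inl ⟨?_, rfl⟩)⟩,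
      had, har, hbd, hbr⟩
    rw [h1, har, hbr]
  · exact absurd (h.2 ▸ aux_dom_isId p) hna
  · obtain ⟨h1, h2, -, h4, h5, h6⟩ := h
    exact absurd ⟨p, hp, q, hq, Or.inr (Or.inr (Or.inr
      ⟨h1, h2, hnb, by rw [h4, had, hbd], h5, by rw [h6, har, hbr]⟩))⟩ hb

/-- Every member `X` of the term algebra of `Z` splits only finitely many
pairs `(x,y)` of distinct elements of `I`. -/
theorem stmt_4 (X : Set Atom) (hX : InTA Atom X) :
    {p : Atom × Atom | p.1.isId ∧ p.2.isId ∧ p.1 ≠ p.2 ∧ Splits X p.1 p.2}.Finite := by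
  induction hX with
  | sing a =>
    refine (Set.finite_singleton (a.dom, a.rg)).subset ?_
    rintro ⟨x, y⟩ ⟨-, -, -, c, hc, b, -, h1, h2, -, -⟩
    have hc' : c = a := hc
    subst hc'
    exact Prod.ext h1.symm h2.symm
  | idset =>
    refine Set.finite_empty.subset ?_
    rintro ⟨x, y⟩ ⟨-, -, hne, c, hc, b, -, h1, h2, -, -⟩
    exact hne (by rw [← h1, ← h2]; exact aux_id c hc)
  | @union X Y _ _ ihX ihY =>
    refine (ihX.union ihY).subset ?_
    rintro ⟨x, y⟩ ⟨i1, i2, hne, a, ha, b, hb, h⟩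
    rcases ha with ha | ha
    · exact Or.inl ⟨i1, i2, hne, a, ha, b, fun h => hb (Or.inl h), h⟩
    · exact Or.inr ⟨i1, i2, hne, a, ha, b, fun h => hb (Or.inr h), h⟩
  | @compl X _ ih =>
    refine ih.subset ?_
    rintro ⟨x, y⟩ ⟨i1, i2, hne, a, ha, b, hb, h1, h2, h3, h4⟩
    exact ⟨i1, i2, hne, b, not_not.mp hb, a, ha, h3, h4, h1, h2⟩
  | @comp X Y _ _ ihX ihY =>
    refine (ihX.union ihY).subset ?_
    rintro ⟨x, y⟩ ⟨i1, i2, hne, h⟩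
    rcases aux_splits_comp X Y x y hne h with h | h
    · exact Or.inl ⟨i1, i2, hne, h⟩
    · exact Or.inr ⟨i1, i2, hne, h⟩
  | @conv X _ ih =>
    refine (ih.image Prod.swap).subset ?_
    rintro ⟨x, y⟩ ⟨i1, i2, hne, a, ha, b, hb, h1, h2, h3, h4⟩
    rw [aux_conv] at ha hb
    refine ⟨(y, x), ⟨i2, i1, fun h => hne h.symm, a.cnv, ha, b.cnv, hb, ?_⟩, rfl⟩
    simp only [aux_dom_cnv, aux_rg_cnv]
    exact ⟨h2, h1, h4, h3⟩
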